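/- Let H be a finitely generated subgroup of a free group F. Then the rank of Dep(H), the subgroup of F generated by all elements of F that depend on H, is at most the rank of H. -/

import Mathlib

open scoped Monoid.Coprod

variable {F : Type*}

/-- The canonical homomorphism `φ_g : H ∗ ⟨x⟩ → F` from the free product of `H` with an
infinite cyclic group (the free group on one generator `x`), restricting to the inclusion
`H ↪ F` and sending `x` to `g`. -/
noncomputable def phi [Group F] (H : Subgroup F) (g : F) :
    (↥H ∗ FreeGroup Unit) →* F :=
  Monoid.Coprod.lift H.subtype (FreeGroup.lift fun _ => g)

/-- `g` depends on `H` (is algebraic over `H`) if `φ_g` is not injective. -/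
def Depends [Group F] (H : Subgroup F) (g : F) : Prop :=
  ¬ Function.Injective (phi H g)

/-- `dep H`: the set of elements of `F` that depend on `H`. -/
def depSet [Group F] (H : Subgroup F) : Set F := {g | Depends H g}

/-- `Dep H`: the subgroup generated by the elements that depend on `H`. -/
noncomputable def DepSubgroup [Group F] (H : Subgroup F) : Subgroup F :=
  Subgroup.closure (depSet H)

/-- The rank of a subgroup: the minimal cardinality of a generating set. For subgroups of
free groups this equals the cardinality of a free basis. -/
noncomputable def rk [Group F] (H : Subgroup F) : Cardinal :=
  ⨅ S : {S : Set F // Subgroup.closure S = H}, Cardinal.mk S.1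

/-!
A finitely generated free group is Hopfian, being residually finite. Hence a surjection from a
group with `n` generators onto a free group with a basis of at least `n` elements is injective.
Applied to `φ_g : H ∗ ⟨x⟩ → ⟨H, g⟩`, this shows that adjoining to `H` an element depending on `H`
does not increase the rank. Dependence is monotone in the subgroup, so the same holds for
adjoining finitely many elements of `dep H`. Finally `Dep H` is the directed union of the
subgroups obtained in this way, and in a free group a directed union of subgroups of rank at
most `n` has rank at most `n`: any finite part of a basis of the union lies in one of the
subgroups, which then retracts onto the free group on that part.
-/

section FiniteQuotients

variable (G Q : Type*) [Group G] [Group Q] [Group.FG G]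

theorem exists_injective_monoidHom_to_pi :
    ∃ r : (G →* Q) → (Fin (Group.rank G) → Q), Function.Injective r := by
  obtain ⟨S, hcard, hS⟩ := Group.rank_spec G
  let e : Fin (Group.rank G) ≃ S := (Fintype.equivFinOfCardEq (by simpa using hcard)).symm
  refine ⟨fun f i => f (e i), fun f g hfg => MonoidHom.eq_of_eqOn_dense hS fun s hs => ?_⟩
  simpa using congrFun hfg (e.symm ⟨s, hs⟩)

theorem finite_monoidHom [Finite Q] : Finite (G →* Q) :=
  let ⟨_, hr⟩ := exists_injective_monoidHom_to_pi G Q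
  .of_injective _ hr

theorem natCard_monoidHom_le [Finite Q] : Nat.card (G →* Q) ≤ Nat.card Q ^ Group.rank G := by
  obtain ⟨r, hr⟩ := exists_injective_monoidHom_to_pi G Q
  simpa [Nat.card_fun] using Nat.card_le_card_of_injective r hr

variable {G} in
/-- Precomposition with a surjective `f` permutes the finite set of homomorphisms from `G` to a
given finite quotient of `G`, so every finite quotient map factors through `f`. -/
theorem injective_of_surjective_of_residuallyFinite [Group.ResiduallyFinite G]
    {f : G →* G} (hf : Function.Surjective f) : Function.Injective f := by
  rw [injective_iff_map_eq_one]
  refine fun g hg => Group.eq_one_iff_forall_finiteIndexNormalSubroup g fun N => ?_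
  have : Finite (G →* G ⧸ N.toSubgroup) := finite_monoidHom _ _
  have hinj : Function.Injective fun r : G →* G ⧸ N.toSubgroup => r.comp f :=
    fun _ _ h => (MonoidHom.cancel_right hf).1 h
  obtain ⟨r, hr⟩ := Finite.surjective_of_injective hinj (QuotientGroup.mk' N.toSubgroup)
  have hmk : QuotientGroup.mk' N.toSubgroup g = 1 := by
    rw [← hr, MonoidHom.comp_apply, hg, map_one]
  exact (QuotientGroup.eq_one_iff g).1 hmk

end FiniteQuotients

theorem rank_freeGroup (α : Type*) [Finite α] : Group.rank (FreeGroup α) = Nat.card α := by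
  classical
  apply le_antisymm
  · have := Fintype.ofFinite α
    have hclosure : Subgroup.closure ((Finset.univ.image FreeGroup.of : Finset (FreeGroup α)) :
        Set (FreeGroup α)) = ⊤ := by
      rw [Finset.coe_image, Finset.coe_univ, Set.image_univ, FreeGroup.closure_range_of]
    rw [Nat.card_eq_fintype_card]
    exact (Group.rank_le hclosure).trans Finset.card_image_le
  · let Q := Multiplicative (ZMod 2)
    have hQ : Nat.card Q = 2 := by simp [Q]
    have hcount : Nat.card (FreeGroup α →* Q) = 2 ^ Nat.card α := by
      rw [← Nat.card_congr (FreeGroup.lift : (α → Q) ≃ (FreeGroup α →* Q)), Nat.card_fun, hQ]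
    have hle : 2 ^ Nat.card α ≤ 2 ^ Group.rank (FreeGroup α) := by
      simpa only [hcount, hQ] using natCard_monoidHom_le (FreeGroup α) Q
    exact (Nat.pow_le_pow_iff_right one_lt_two).1 hle

section ResidualFiniteness

variable {α : Type*}

theorem exists_perm_apply_eq_of_eq_mul {G : Type*} [Group G] (T : Finset G) (g : G) :
    ∃ σ : Equiv.Perm T, ∀ x y : T, (y : G) = g * x → σ x = y := by
  have hmaps : Set.MapsTo (fun x : T => g * x) {x | g * x ∈ T} T := fun _ hx => hx
  have hinj : Set.InjOn (fun x : T => g * (x : G)) {x | g * x ∈ T} :=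
    fun _ _ _ _ h => Subtype.ext (mul_left_cancel h)
  obtain ⟨σ, hσ⟩ := hmaps.exists_equiv_extend_of_card_eq (Fintype.card_coe T) hinj
  refine ⟨σ, fun x y h => Subtype.ext ?_⟩
  rw [hσ x (show g * x ∈ T from h ▸ y.2), h]

theorem lift_mk_singleton_apply {T : Finset (FreeGroup α)} {σ : α → Equiv.Perm T}
    (hσ : ∀ a (x y : T), (y : FreeGroup α) = .of a * x → σ a x = y)
    (l : α × Bool) {x y : T} (h : (y : FreeGroup α) = FreeGroup.mk [l] * x) :
    FreeGroup.lift σ (FreeGroup.mk [l]) x = y := by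
  obtain ⟨a, _ | _⟩ := l
  · have hyx : σ a y = x := hσ a y x (by rw [h]; exact (mul_inv_cancel_left _ _).symm)
    simp [← hyx]
  · simpa using hσ a x y h

theorem coe_lift_mk_apply_one {T : Finset (FreeGroup α)} {σ : α → Equiv.Perm T}
    (hσ : ∀ a (x y : T), (y : FreeGroup α) = .of a * x → σ a x = y)
    (one_mem : 1 ∈ T) (L : List (α × Bool)) (hL : ∀ M, M <:+ L → FreeGroup.mk M ∈ T) :
    (FreeGroup.lift σ (FreeGroup.mk L) ⟨1, one_mem⟩ : FreeGroup α) = FreeGroup.mk L := by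
  induction L with
  | nil => simp [← FreeGroup.one_eq_mk]
  | cons l L ih =>
    have hmk : FreeGroup.mk (l :: L) = FreeGroup.mk [l] * FreeGroup.mk L := by simp
    have hy := hL (l :: L) List.suffix_rfl
    have ih := ih fun M hM => hL M (hM.trans (List.suffix_cons l L))
    have hstep : FreeGroup.lift σ (FreeGroup.mk [l])
        (FreeGroup.lift σ (FreeGroup.mk L) ⟨1, one_mem⟩) = ⟨FreeGroup.mk (l :: L), hy⟩ :=
      lift_mk_singleton_apply hσ l (by rw [ih]; exact hmk)
    rw [hmk, map_mul, Equiv.Perm.mul_apply, hstep]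
    exact hmk

/-- The letters act as partial injections on the finite set of suffixes of `w`; extend these to
permutations. Applying the letters of `w` from right to left moves `1` through the suffixes
to `w`. -/
theorem exists_finset_perm_ne_one {w : FreeGroup α} (hw : w ≠ 1) :
    ∃ (T : Finset (FreeGroup α)) (f : FreeGroup α →* Equiv.Perm T), f w ≠ 1 := by
  classical
  let T : Finset (FreeGroup α) := (w.toWord.tails.map FreeGroup.mk).toFinset
  have suffix_mem : ∀ M, M <:+ w.toWord → FreeGroup.mk M ∈ T := fun M hM => by
    simpa [T] using ⟨M, hM, rfl⟩
  choose σ hσ using fun a : α => exists_perm_apply_eq_of_eq_mul T (FreeGroup.of a)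
  have key := coe_lift_mk_apply_one hσ (suffix_mem [] List.nil_suffix) w.toWord suffix_mem
  refine ⟨T, FreeGroup.lift σ, fun h => hw ?_⟩
  rw [FreeGroup.mk_toWord, h] at key
  exact key.symm

theorem residuallyFinite_of_isFreeGroup (G : Type*) [Group G] [IsFreeGroup G] :
    Group.ResiduallyFinite G :=
  Group.residuallyFinite_of_forall_exists_finite_monoidHom fun g hg => by
    have hne : IsFreeGroup.toFreeGroup G g ≠ 1 := by simpa using hg
    obtain ⟨T, f, hf⟩ := exists_finset_perm_ne_one hne
    exact ⟨Equiv.Perm T, inferInstance, inferInstance,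
      f.comp (IsFreeGroup.toFreeGroup G).toMonoidHom, hf⟩

end ResidualFiniteness

section Bases

open scoped Cardinal

variable {ι G A : Type*} [Group G] [Group A]

theorem closure_range_freeGroupBasis (b : FreeGroupBasis ι G) :
    Subgroup.closure (Set.range b) = ⊤ := by
  have hb : Set.range b = b.repr.symm '' Set.range FreeGroup.of := by
    rw [← Set.range_comp]; rfl
  rw [hb]
  exact (MonoidHom.map_closure b.repr.symm.toMonoidHom _).symm.trans <| by
    rw [FreeGroup.closure_range_of]
    exact Subgroup.map_top_of_surjective _ b.repr.symm.surjective

theorem exists_surjective_of_rank_le_mk [Group.FG A] (b : FreeGroupBasis ι G)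
    (h : (Group.rank A : Cardinal) ≤ #ι) :
    ∃ p : G →* A, Function.Surjective p := by
  obtain ⟨S, hcard, hS⟩ := Group.rank_spec A
  obtain ⟨e⟩ : Nonempty (S ↪ ι) := by
    simpa [← Cardinal.lift_mk_le', hcard] using h
  refine ⟨b.lift (Function.extend e Subtype.val 1), ?_⟩
  rw [← MonoidHom.range_eq_top, ← top_le_iff, ← hS, Subgroup.closure_le]
  intro s hs
  exact ⟨b (e ⟨s, hs⟩), by simp [e.injective.extend_apply]⟩

theorem injective_of_surjective_of_rank_le_mk [Group.FG A] (b : FreeGroupBasis ι G)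
    (h : (Group.rank A : Cardinal) ≤ #ι) {f : A →* G}
    (hf : Function.Surjective f) : Function.Injective f := by
  have := b.isFreeGroup
  have := residuallyFinite_of_isFreeGroup G
  have : Group.FG G := Group.fg_of_surjective hf
  obtain ⟨p, hp⟩ := exists_surjective_of_rank_le_mk b h
  have hfp : Function.Injective (f.comp p) :=
    injective_of_surjective_of_residuallyFinite (hf.comp hp)
  exact Function.Injective.of_comp_right hfp hp

theorem card_le_rank_of_subset_range [Group.FG A] (b : FreeGroupBasis ι G) (f : A →* G)
    (Y : Finset ι) (hY : ∀ y ∈ Y, b y ∈ f.range) : Y.card ≤ Group.rank A := by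
  classical
  let r : G →* FreeGroup Y :=
    b.lift fun i => if hi : i ∈ Y then FreeGroup.of ⟨i, hi⟩ else 1
  have hsurj : Function.Surjective (r.comp f) := by
    rw [← MonoidHom.range_eq_top, ← top_le_iff, ← FreeGroup.closure_range_of,
      Subgroup.closure_le]
    rintro _ ⟨y, rfl⟩
    obtain ⟨a, ha⟩ := hY y y.2
    exact ⟨a, by simp [r, ha]⟩
  calc Y.card = Nat.card Y := by simp
    _ = Group.rank (FreeGroup Y) := (rank_freeGroup Y).symm
    _ ≤ Group.rank A := Group.rank_le_of_surjective _ hsurj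

end Bases

section Rank

open scoped Cardinal

variable [Group F] {H : Subgroup F}

theorem rk_le_mk {S : Set F} (hS : Subgroup.closure S = H) : rk H ≤ #S :=
  ciInf_le' (fun S : {S : Set F // Subgroup.closure S = H} => #S.1) ⟨S, hS⟩

theorem exists_closure_eq_mk_eq_rk (H : Subgroup F) :
    ∃ S : Set F, Subgroup.closure S = H ∧ #S = rk H := by
  have : Nonempty {S : Set F // Subgroup.closure S = H} := ⟨⟨H, H.closure_eq⟩⟩
  obtain ⟨⟨S, hS⟩, hmin⟩ :=
    ciInf_mem fun S : {S : Set F // Subgroup.closure S = H} => #S.1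
  exact ⟨S, hS, hmin⟩

theorem fg_of_rk_lt_aleph0 (h : rk H < ℵ₀) : H.FG := by
  obtain ⟨S, hS, hcard⟩ := exists_closure_eq_mk_eq_rk H
  exact (Subgroup.fg_iff H).2 ⟨S, hS, Cardinal.lt_aleph0_iff_set_finite.1 (hcard ▸ h)⟩

theorem rk_le_mk_of_closure_eq_top {S : Set H} (hS : Subgroup.closure S = ⊤) :
    rk H ≤ #S := by
  have himage : Subgroup.closure (H.subtype '' S) = H := by
    rw [← MonoidHom.map_closure, hS, ← MonoidHom.range_eq_map, H.range_subtype]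
  exact (rk_le_mk himage).trans Cardinal.mk_image_le

theorem rk_le_mk_generators [IsFreeGroup H] : rk H ≤ #(IsFreeGroup.Generators H) :=
  (rk_le_mk_of_closure_eq_top
    (closure_range_freeGroupBasis (IsFreeGroup.basis H))).trans Cardinal.mk_range_le

theorem rk_eq_rank (H : Subgroup F) [Group.FG H] : rk H = Group.rank H := by
  apply le_antisymm
  · obtain ⟨S, hcard, hS⟩ := Group.rank_spec H
    simpa [hcard] using rk_le_mk_of_closure_eq_top hS
  · obtain ⟨S, rfl, hcard⟩ := exists_closure_eq_mk_eq_rk H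
    rw [← hcard]
    rcases S.finite_or_infinite with hfin | hinf
    · have := hfin.to_subtype
      rw [← Nat.cast_card]
      exact_mod_cast Subgroup.rank_closure_finite_le_nat_card S
    · have := hinf.to_subtype
      exact (Cardinal.natCast_lt_aleph0.trans_le (Cardinal.aleph0_le_mk S)).le

theorem rk_iSup_le_of_directed [IsFreeGroup F] {κ : Type*} [Nonempty κ] {K : κ → Subgroup F}
    (hK : Directed (· ≤ ·) K) {n : ℕ} (hn : ∀ i, rk (K i) ≤ n) : rk (⨆ i, K i) ≤ n := by
  let b := IsFreeGroup.basis ↥(⨆ i, K i)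
  refine rk_le_mk_generators.trans (Cardinal.card_le_of fun Y => ?_)
  have hmem (y) : ∃ i, (b y : F) ∈ K i := (Subgroup.mem_iSup_of_directed hK).1 (b y).2
  choose i hi using hmem
  obtain ⟨j, hj⟩ := hK.finite_le fun y : Y => i y
  have : Group.FG (K j) := (Group.fg_iff_subgroup_fg _).2 <|
    fg_of_rk_lt_aleph0 ((hn j).trans_lt Cardinal.natCast_lt_aleph0)
  have hY : Y.card ≤ Group.rank (K j) :=
    card_le_rank_of_subset_range b (Subgroup.inclusion (le_iSup K j)) Y fun y hy =>
      ⟨⟨b y, hj ⟨y, hy⟩ (hi y)⟩, rfl⟩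
  have hrank : Group.rank (K j) ≤ n := by exact_mod_cast (rk_eq_rank (K j)).symm.trans_le (hn j)
  exact hY.trans hrank

end Rank

section FreeProduct

open Monoid.Coprod

variable (A β : Type*) {B : Type*} [Group A] [Group B]

/-- The action of `A` on the free group on `A × β` by left translation of the first coordinate.
It models the conjugation action of `A` on the kernel of the projection `A ∗ FreeGroup β → A`,
with the generator `(a, b)` standing for `a * b * a⁻¹`. -/
def leftTranslation : A →* MulAut (FreeGroup (A × β)) where
  toFun a := FreeGroup.freeGroupCongr ((Equiv.mulLeft a).prodCongr (Equiv.refl β))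
  map_one' := by ext x; simp
  map_mul' a a' := by ext x; simp [FreeGroup.map.comp, Function.comp_def, Prod.map_def]

variable {A β} in
@[simp]
theorem leftTranslation_of (a : A) (p : A × β) :
    leftTranslation A β a (FreeGroup.of p) = FreeGroup.of (a * p.1, p.2) := by
  simp [leftTranslation, Prod.map]

/-- The splitting of `A ∗ FreeGroup β` as a semidirect product of the kernel of the projection
onto `A`, which is free on the conjugates `a * b * a⁻¹`, with `A`. -/
noncomputable def coprodToSemidirect :
    A ∗ FreeGroup β →* FreeGroup (A × β) ⋊[leftTranslation A β] A :=
  lift SemidirectProduct.inr (SemidirectProduct.inl.comp (FreeGroup.map fun b => (1, b)))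

/-- The inverse of `coprodToSemidirect`. -/
noncomputable def semidirectToCoprod :
    FreeGroup (A × β) ⋊[leftTranslation A β] A →* A ∗ FreeGroup β :=
  SemidirectProduct.lift
    (FreeGroup.lift fun p => MulAut.conj (inl p.1) (inr (FreeGroup.of p.2))) inl fun a => by
      ext p; simp [mul_assoc]

theorem coprodToSemidirect_injective : Function.Injective (coprodToSemidirect A β) := by
  have hcomp : (semidirectToCoprod A β).comp (coprodToSemidirect A β) = .id _ := by
    apply hom_ext <;> ext <;> simp [semidirectToCoprod, coprodToSemidirect]
  have hleft : Function.LeftInverse (semidirectToCoprod A β) (coprodToSemidirect A β) :=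
    fun x => DFunLike.congr_fun hcomp x
  exact hleft.injective

variable {A}

theorem coprod_map_id_freeGroup_injective {f : A →* B} (hf : Function.Injective f) :
    Function.Injective (map f (.id (FreeGroup β))) := by
  let fβ : FreeGroup (A × β) →* FreeGroup (B × β) := FreeGroup.map (Prod.map f id)
  have hfβ : Function.Injective fβ :=
    FreeGroup.map_injective (hf.prodMap Function.injective_id)
  let φ : FreeGroup (A × β) ⋊[leftTranslation A β] A →*
      FreeGroup (B × β) ⋊[leftTranslation B β] B :=
    SemidirectProduct.map fβ f fun a => by ext p; simp [fβ]
  have hφ : Function.Injective φ := fun x y h =>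
    SemidirectProduct.ext (hfβ (congrArg (·.left) h)) (hf (congrArg (·.right) h))
  have hsquare : (coprodToSemidirect B β).comp (map f (.id (FreeGroup β))) =
      φ.comp (coprodToSemidirect A β) := by
    apply hom_ext <;> ext <;> simp [coprodToSemidirect, φ, fβ]
  refine Function.Injective.of_comp (f := coprodToSemidirect B β) ?_
  rw [← MonoidHom.coe_comp, hsquare]
  exact hφ.comp (coprodToSemidirect_injective A β)

instance fg_coprod [Group.FG A] [Group.FG B] : Group.FG (A ∗ B) := by
  rw [Group.fg_def, ← range_inl_sup_range_inr]
  exact ((Group.fg_iff_subgroup_fg _).1 inferInstance).sup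
    ((Group.fg_iff_subgroup_fg _).1 inferInstance)

theorem rank_coprod_le [Group.FG A] [Group.FG B] :
    Group.rank (A ∗ B) ≤ Group.rank A + Group.rank B := by
  classical
  obtain ⟨S, hcardS, hS⟩ := Group.rank_spec A
  obtain ⟨T, hcardT, hT⟩ := Group.rank_spec B
  have hclosure : Subgroup.closure
      ((S.image inl ∪ T.image inr : Finset (A ∗ B)) : Set (A ∗ B)) = ⊤ := by
    rw [Finset.coe_union, Finset.coe_image, Finset.coe_image, Subgroup.closure_union,
      ← MonoidHom.map_closure, ← MonoidHom.map_closure, hS, hT, ← MonoidHom.range_eq_map,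
      ← MonoidHom.range_eq_map, range_inl_sup_range_inr]
  calc Group.rank (A ∗ B) ≤ (S.image inl ∪ T.image inr).card := Group.rank_le hclosure
    _ ≤ S.card + T.card :=
      (Finset.card_union_le _ _).trans (add_le_add Finset.card_image_le Finset.card_image_le)
    _ = Group.rank A + Group.rank B := by rw [hcardS, hcardT]

end FreeProduct

section Dependence

open Monoid.Coprod
open scoped Cardinal

variable [Group F] {H K : Subgroup F} {g : F}

theorem range_phi (H : Subgroup F) (g : F) : (phi H g).range = H ⊔ Subgroup.closure {g} := by
  rw [phi, range_lift, H.range_subtype, FreeGroup.range_lift_eq_closure, Set.range_const]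

theorem Depends.mono (h : H ≤ K) (hg : Depends H g) : Depends K g := by
  have hcomp : (phi K g).comp (map (Subgroup.inclusion h) (.id _)) = phi H g := by
    apply hom_ext <;> ext <;> simp [phi]
  refine fun hK => hg ?_
  rw [← hcomp, MonoidHom.coe_comp]
  exact hK.comp (coprod_map_id_freeGroup_injective _ (Subgroup.inclusion_injective h))

theorem depends_of_mem (hg : g ∈ H) : Depends H g := by
  intro hinj
  have heq : inl (⟨g, hg⟩ : H) = (inr (FreeGroup.of ()) : ↥H ∗ FreeGroup Unit) :=
    hinj (by simp [phi])
  have hof : 1 = FreeGroup.of () := by simpa using congrArg snd heq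
  exact FreeGroup.of_ne_one _ hof.symm

theorem Depends.rk_sup_closure_singleton_le [IsFreeGroup F] (hH : H.FG) (hg : Depends H g) :
    rk (H ⊔ Subgroup.closure {g}) ≤ rk H := by
  have : Group.FG H := (Group.fg_iff_subgroup_fg H).2 hH
  by_contra! hlt
  rw [← range_phi] at hlt
  have hrank : Group.rank (↥H ∗ FreeGroup Unit) ≤ Group.rank H + 1 := by
    simpa [rank_freeGroup] using rank_coprod_le (A := H) (B := FreeGroup Unit)
  have hgen : (Group.rank (↥H ∗ FreeGroup Unit) : Cardinal) ≤
      #(IsFreeGroup.Generators (phi H g).range) :=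
    calc (Group.rank (↥H ∗ FreeGroup Unit) : Cardinal) ≤ (Group.rank H : Cardinal) + 1 := by
          exact_mod_cast hrank
      _ = Order.succ (rk H) := by rw [rk_eq_rank]; simp
      _ ≤ rk (phi H g).range := Order.succ_le_of_lt hlt
      _ ≤ _ := rk_le_mk_generators
  have hinj := injective_of_surjective_of_rank_le_mk (IsFreeGroup.basis _) hgen
    (phi H g).rangeRestrict_surjective
  exact hg ((phi H g).rangeRestrict_injective_iff.1 hinj)

theorem rk_sup_closure_le [IsFreeGroup F] (hH : H.FG) {T : Set F} (hfin : T.Finite)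
    (hT : T ⊆ depSet H) : rk (H ⊔ Subgroup.closure T) ≤ rk H := by
  induction T, hfin using Set.Finite.induction_on with
  | empty => simp
  | @insert g T _ hfin ih =>
    obtain ⟨hg, hT⟩ := Set.insert_subset_iff.1 hT
    have hfg : (H ⊔ Subgroup.closure T).FG := hH.sup ((Subgroup.fg_iff _).2 ⟨T, rfl, hfin⟩)
    have hinsert : H ⊔ Subgroup.closure (insert g T) =
        H ⊔ Subgroup.closure T ⊔ Subgroup.closure {g} := by
      rw [sup_assoc, ← Subgroup.closure_union, Set.union_singleton]
    rw [hinsert]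
    exact ((Depends.mono le_sup_left hg).rk_sup_closure_singleton_le hfg).trans (ih hT)

theorem DepSubgroup_eq_iSup (H : Subgroup F) : DepSubgroup H =
    ⨆ T : Finset (depSet H), H ⊔ Subgroup.closure (Subtype.val '' (T : Set (depSet H))) := by
  apply le_antisymm
  · refine (Subgroup.closure_le _).2 fun g hg => ?_
    refine Subgroup.mem_iSup_of_mem {⟨g, hg⟩} (Subgroup.mem_sup_right ?_)
    exact Subgroup.subset_closure (by simp)
  · refine iSup_le fun T => sup_le ?_ ?_
    · exact fun h hh => Subgroup.subset_closure (depends_of_mem hh)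
    · exact Subgroup.closure_mono (by rintro _ ⟨g, -, rfl⟩; exact g.2)

end Dependence

/-- for finitely generated `H`, `rank (Dep H) ≤ rank H`. -/
theorem rank_DepSubgroup_le [Group F] [IsFreeGroup F] (H : Subgroup F) (hH : H.FG) :
    rk (DepSubgroup H) ≤ rk H := by
  have : Group.FG H := (Group.fg_iff_subgroup_fg H).2 hH
  have hmono : Monotone fun T : Finset (depSet H) =>
      H ⊔ Subgroup.closure (Subtype.val '' (T : Set (depSet H))) := fun S T hST =>
    sup_le_sup_left (Subgroup.closure_mono (Set.image_mono (Finset.coe_subset.2 hST))) H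
  rw [DepSubgroup_eq_iSup, rk_eq_rank H]
  exact rk_iSup_le_of_directed hmono.directed_le fun T =>
    (rk_sup_closure_le hH (T.finite_toSet.image _) (by simp)).trans_eq (rk_eq_rank H)
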